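/- arXiv:1607.07547 — 6 statements merged into one kernel-verified Lean document; each statement's English description precedes it below -/
import Mathlib

section
/- Let a, b, c be positive reals and d, e reals such that c + d x − e x² > 0 for all x ∈ [0, a/b], and suppose b²c + a(bd − ae) ≥ 0. Define g(x) = (a − b x)·x / (c + d x − e x²) on [0, a/b]. If bd − ae ≠ 0, then g attains its maximum over the interval [0, a/b] at the point u* = (bc/(bd − ae)) · (√(1 + (a/b)·(bd − ae)/(bc)) − 1). If bd − ae = 0, then g attains its maximum over [0, a/b] at the point a/(2b). -/
/-!
Write `D = b d - a e`, `N x = (a - b x) x` and `Q x = c + d x - e x²`. The numerator of `g'` is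
`N' Q - N Q' = a c - 2 b c x - D x²`, so a critical point `u` satisfies `D u² + 2 b c u = a c`, and
for such `u` there is the exact identity `N u * Q x - N x * Q u = (D u + b c) (u - x)²`.
Hence `u` is a global maximizer as soon as `D u + b c ≥ 0`. For `u*` this quantity equals
`b c √(1 + a D / (b² c))`, and rationalizing gives `u* = (a / b) / (√(…) + 1) ∈ [0, a / b]`.
For `D = 0` the critical equation is linear, with solution `a / (2 b)`.
-/

/-- A critical point `u` of `g` in `[0, a/b]` with `(b d - a e) u + b c ≥ 0` is a maximizer. -/
lemma isMaxOn_of_critical (a b c d e u : ℝ)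
    (hden : ∀ x ∈ Set.Icc (0 : ℝ) (a / b), 0 < c + d * x - e * x ^ 2)
    (hu : u ∈ Set.Icc (0 : ℝ) (a / b))
    (hcrit : (b * d - a * e) * u ^ 2 + 2 * (b * c) * u = a * c)
    (hpos : 0 ≤ (b * d - a * e) * u + b * c) :
    IsMaxOn (fun x => (a - b * x) * x / (c + d * x - e * x ^ 2))
      (Set.Icc (0 : ℝ) (a / b)) u := by
  intro x hx
  change (a - b * x) * x / (c + d * x - e * x ^ 2) ≤ (a - b * u) * u / (c + d * u - e * u ^ 2)
  rw [div_le_div_iff₀ (hden x hx) (hden u hu)]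
  have key : (a - b * u) * u * (c + d * x - e * x ^ 2) - (a - b * x) * x * (c + d * u - e * u ^ 2)
      = ((b * d - a * e) * u + b * c) * (u - x) ^ 2 := by
    linear_combination (x - u) * hcrit
  have := mul_nonneg hpos (sq_nonneg (u - x))
  linarith

/-- Theorem 1 core: the function `g(x) = (a − b x)·x / (c + d x − e x²)` attains its
maximum over `[0, a/b]` at `u* = (bc/(bd − ae))(√(1 + (a/b)(bd − ae)/(bc)) − 1)` when
`bd − ae ≠ 0`, and at `a/(2b)` when `bd − ae = 0`. -/
theorem maxOn_training_energy
    (a b c d e : ℝ) (ha : 0 < a) (hb : 0 < b) (hc : 0 < c)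
    (hden : ∀ x ∈ Set.Icc (0 : ℝ) (a / b), 0 < c + d * x - e * x ^ 2)
    (hfeas : 0 ≤ b ^ 2 * c + a * (b * d - a * e)) :
    (b * d - a * e ≠ 0 →
      (b * c / (b * d - a * e)) * (Real.sqrt (1 + (a / b) * (b * d - a * e) / (b * c)) - 1)
          ∈ Set.Icc (0 : ℝ) (a / b) ∧
      IsMaxOn (fun x => (a - b * x) * x / (c + d * x - e * x ^ 2))
        (Set.Icc (0 : ℝ) (a / b))
        ((b * c / (b * d - a * e)) *
          (Real.sqrt (1 + (a / b) * (b * d - a * e) / (b * c)) - 1))) ∧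
    (b * d - a * e = 0 →
      a / (2 * b) ∈ Set.Icc (0 : ℝ) (a / b) ∧
      IsMaxOn (fun x => (a - b * x) * x / (c + d * x - e * x ^ 2))
        (Set.Icc (0 : ℝ) (a / b)) (a / (2 * b))) := by
  refine ⟨fun hD => ?_, fun hD => ?_⟩
  · set D := b * d - a * e with hDdef
    have hrad : 1 + a / b * D / (b * c) = (b ^ 2 * c + a * D) / (b ^ 2 * c) := by
      field_simp
    have hsq : Real.sqrt (1 + a / b * D / (b * c)) ^ 2 = 1 + a / b * D / (b * c) := by
      apply Real.sq_sqrt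
      rw [hrad]
      positivity
    have hs0 := Real.sqrt_nonneg (1 + a / b * D / (b * c))
    set s := Real.sqrt (1 + a / b * D / (b * c))
    set u := b * c / D * (s - 1) with hu
    have hDu : D * u = b * c * (s - 1) := by
      rw [hu]
      field_simp
    have hprod : u * (s + 1) = a / b := by
      have h : u * (s + 1) = b * c / D * (s ^ 2 - 1) := by rw [hu]; ring
      rw [h, hsq]
      field_simp
      ring
    have hueq : u = a / b / (s + 1) := by
      rw [eq_div_iff (by positivity), hprod]
    have hmem : u ∈ Set.Icc (0 : ℝ) (a / b) := by
      rw [hueq]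
      exact ⟨by positivity, div_le_self (by positivity) (by linarith)⟩
    refine ⟨hmem, isMaxOn_of_critical a b c d e u hden hmem ?_ ?_⟩
    · rw [← hDdef]
      have hab : b * (a / b) = a := by field_simp
      linear_combination u * hDu + b * c * hprod + c * hab
    · rw [← hDdef, hDu]
      have : 0 ≤ b * c * s := by positivity
      linarith
  · have hmem : a / (2 * b) ∈ Set.Icc (0 : ℝ) (a / b) :=
      ⟨by positivity, div_le_div_of_nonneg_left ha.le hb (by linarith)⟩
    refine ⟨hmem, isMaxOn_of_critical a b c d e _ hden hmem ?_ ?_⟩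
    · rw [hD]
      field_simp
      ring
    · rw [hD]
      nlinarith [mul_pos hb hc]
end

section
/- Let M, N, L, K be positive integers with 1 ≤ L < N and 1 ≤ K < M, and let E > 0, β > 0 be reals. Define a = L(M − K)Eβ, b = L²(M − K), c = K·Eβ + N − L, d = (N − L − K)·L + (K − L)⁺ · c, and e = K·L·(K − L)⁺, where (x)⁺ = max{x, 0}. Then b²c + a(bd − ae) ≥ 0; equivalently, 1 + (a/b)·(bd − ae)/(bc) ≥ 0. -/
/-!
With `p = (K − L)⁺`, the terms in `K` cancel and
`b²c + a(bd − ae) = L³(M − K)²(N − L)((p + L)Eβ + L)`, a product of nonnegative factors.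
The second expression is the first one divided by `b²c > 0`.
-/

/-- Appendix A, equation (48): for the zero-forcing Table II values
`a = L(M−K)Eβ`, `b = L²(M−K)`, `c = K·Eβ + N − L`,
`d = (N−L−K)L + (K−L)⁺·c`, `e = KL(K−L)⁺`, one has `b²c + a(bd − ae) ≥ 0`,
equivalently `1 + (a/b)·(bd − ae)/(bc) ≥ 0`. -/
theorem feasibility_ZF
    (M N L K : ℕ) (hL : 1 ≤ L) (hLN : L < N) (hK : 1 ≤ K) (hKM : K < M)
    (E β : ℝ) (hE : 0 < E) (hβ : 0 < β) :
    let a : ℝ := (L : ℝ) * ((M : ℝ) - K) * E * β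
    let b : ℝ := (L : ℝ) ^ 2 * ((M : ℝ) - K)
    let c : ℝ := (K : ℝ) * E * β + ((N : ℝ) - L)
    let d : ℝ := ((N : ℝ) - L - K) * L + max ((K : ℝ) - L) 0 * c
    let e : ℝ := (K : ℝ) * L * max ((K : ℝ) - L) 0
    0 ≤ b ^ 2 * c + a * (b * d - a * e) ∧
      0 ≤ 1 + (a / b) * (b * d - a * e) / (b * c) := by
  intro a b c d e
  have hL0 : (0 : ℝ) < L := by exact_mod_cast hL
  have hK0 : (0 : ℝ) < K := by exact_mod_cast hK
  have hNL : (0 : ℝ) < (N : ℝ) - L := sub_pos.mpr (by exact_mod_cast hLN)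
  have hMK : (0 : ℝ) < (M : ℝ) - K := sub_pos.mpr (by exact_mod_cast hKM)
  have hp : (0 : ℝ) ≤ max ((K : ℝ) - L) 0 := le_max_right _ _
  have hb : 0 < b := by positivity
  have hc : 0 < c := by positivity
  have key : b ^ 2 * c + a * (b * d - a * e) =
      (L : ℝ) ^ 3 * ((M : ℝ) - K) ^ 2 * ((N : ℝ) - L) *
        ((max ((K : ℝ) - L) 0 + L) * (E * β) + L) := by
    simp only [a, b, c, d, e]
    ring
  have h1 : 0 ≤ b ^ 2 * c + a * (b * d - a * e) := by
    rw [key]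
    positivity
  refine ⟨h1, ?_⟩
  have h2 : 1 + (a / b) * (b * d - a * e) / (b * c) =
      (b ^ 2 * c + a * (b * d - a * e)) / (b ^ 2 * c) := by
    clear_value a b c d e
    field_simp
  rw [h2]
  exact div_nonneg h1 (by positivity)
end

section
/- Let U and Q be positive integers, let φ : {1, …, U} → ℝ be monotone nondecreasing, and let O_1, …, O_Q be positive integers with O_1 + ⋯ + O_Q = U. Consider all partitions of {1, …, U} into Q pairwise disjoint nonempty blocks B_1, …, B_Q with |B_q| = O_q for every q, and the cost of a partition defined as ∑_{q=1}^{Q} φ(max B_q). Then the minimum cost over all such partitions is attained by a partition in which every block B_q is a set of consecutive integers (an interval). -/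
/-!
The optimal arrangement lays the blocks out as consecutive intervals in order of increasing size,
so that the `k`-th interval ends at the sum of the `k` smallest sizes. For an arbitrary competitor
`C`, list its blocks by increasing maximum: the first `k` of them are disjoint and all contained in
`{1, …, m}`, where `m` is the `k`-th smallest maximum, so `m` is at least a sum of `k` of the sizes,
hence at least the sum of the `k` smallest ones (`sum_Iic_le_sum_of_card_eq`). Thus the sorted
maxima of the intervals are dominated termwise by the sorted maxima of `C`, and monotonicity of `φ`
compares the costs.
-/

/-- For a monotone `a`, an initial segment has the least sum among index sets of its size: outside
the common part, its terms are at most `a k` and those of the other set at least `a k`. -/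
lemma sum_Iic_le_sum_of_card_eq {n : ℕ} (a : Fin n → ℕ) (ha : Monotone a) (k : Fin n)
    (s : Finset (Fin n)) (hs : s.card = (Finset.Iic k).card) :
    ∑ j ∈ Finset.Iic k, a j ≤ ∑ j ∈ s, a j := by
  have hcard : (Finset.Iic k \ s).card = (s \ Finset.Iic k).card :=
    Finset.card_sdiff_comm hs.symm
  have h1 : ∑ j ∈ Finset.Iic k \ s, a j ≤ (Finset.Iic k \ s).card • a k := by
    refine Finset.sum_le_card_nsmul _ _ _ fun j hj => ha ?_
    exact Finset.mem_Iic.1 (Finset.mem_sdiff.1 hj).1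
  have h2 : (s \ Finset.Iic k).card • a k ≤ ∑ j ∈ s \ Finset.Iic k, a j := by
    refine Finset.card_nsmul_le_sum _ _ _ fun j hj => ha ?_
    have := (Finset.mem_sdiff.1 hj).2
    rw [Finset.mem_Iic, not_le] at this
    exact this.le
  have h3 := Finset.sum_inter_add_sum_sdiff (Finset.Iic k) s a
  have h4 := Finset.sum_inter_add_sum_sdiff s (Finset.Iic k) a
  rw [Finset.inter_comm] at h4
  rw [hcard] at h1
  omega

/-- The maximum of the `k`-th block of `C`, in order of increasing maxima, is at least the sum of
the sizes of the first `k` blocks in that order. -/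
lemma sum_card_le_sup {U n : ℕ} (C : Fin n → Finset ℕ)
    (hd : ∀ p q, p ≠ q → Disjoint (C p) (C q))
    (hu : Finset.univ.biUnion C = Finset.Icc 1 U)
    (τ : Equiv.Perm (Fin n)) (hτ : Monotone fun k => (C (τ k)).sup id) (k : Fin n) :
    ∑ j ∈ Finset.Iic k, (C (τ j)).card ≤ (C (τ k)).sup id := by
  rw [← Finset.card_biUnion fun i _ j _ hij => hd _ _ (τ.injective.ne hij)]
  have hsub : ((Finset.Iic k).biUnion fun j => C (τ j)) ⊆ Finset.Icc 1 ((C (τ k)).sup id) := by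
    intro x hx
    obtain ⟨j, hj, hxj⟩ := Finset.mem_biUnion.1 hx
    have hxU : x ∈ Finset.Icc 1 U := by
      rw [← hu]
      exact Finset.mem_biUnion.2 ⟨τ j, Finset.mem_univ _, hxj⟩
    have hle : x ≤ (C (τ j)).sup id := Finset.le_sup (f := id) hxj
    exact Finset.mem_Icc.2 ⟨(Finset.mem_Icc.1 hxU).1, hle.trans (hτ (Finset.mem_Iic.1 hj))⟩
  simpa using Finset.card_le_card hsub

/-- Theorem 2 (abstract form): for a nondecreasing cost `φ` on sorted user indices
`{1, …, U}`, among all partitions of `{1, …, U}` into `Q` pairwise disjoint blocks of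
prescribed sizes `O_1, …, O_Q`, the cost `∑_q φ(max B_q)` is minimized by a partition
whose blocks are all intervals of consecutive integers. -/
theorem optimal_partition_into_intervals
    (U Q : ℕ) (hU : 0 < U) (hQ : 0 < Q)
    (φ : ℕ → ℝ) (hφ : Monotone φ)
    (O : Fin Q → ℕ) (hO : ∀ q, 0 < O q) (hsum : ∑ q, O q = U) :
    ∃ B : Fin Q → Finset ℕ,
      (∀ p q, p ≠ q → Disjoint (B p) (B q)) ∧
      (Finset.univ.biUnion B = Finset.Icc 1 U) ∧
      (∀ q, (B q).card = O q) ∧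
      (∀ q, ∃ p r : ℕ, B q = Finset.Icc p r) ∧
      (∀ C : Fin Q → Finset ℕ,
        (∀ p q, p ≠ q → Disjoint (C p) (C q)) →
        (Finset.univ.biUnion C = Finset.Icc 1 U) →
        (∀ q, (C q).card = O q) →
        ∑ q, φ ((B q).sup id) ≤ ∑ q, φ ((C q).sup id)) := by
  classical
  set σ : Equiv.Perm (Fin Q) := Tuple.sort O with hσ
  have hmono : Monotone (O ∘ σ) := Tuple.monotone_sort O
  -- `S k` and `T k` are the total sizes of the blocks strictly before, and up to, position `k`.
  let S : Fin Q → ℕ := fun k => ∑ j ∈ Finset.Iio k, O (σ j)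
  let T : Fin Q → ℕ := fun k => ∑ j ∈ Finset.Iic k, O (σ j)
  have hT : ∀ k, T k = S k + O (σ k) := by
    intro k
    simp only [S, T, ← Finset.Iio_insert k]
    rw [Finset.sum_insert (by simp), add_comm]
  have hTS : ∀ j k, j < k → T j ≤ S k := fun j k hjk =>
    Finset.sum_le_sum_of_subset fun i hi =>
      Finset.mem_Iio.2 ((Finset.mem_Iic.1 hi).trans_lt hjk)
  have hTU : ∀ k, T k ≤ U := by
    intro k
    rw [← hsum, ← Equiv.sum_comp σ O]
    exact Finset.sum_le_sum_of_subset (Finset.subset_univ _)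
  let B : Fin Q → Finset ℕ := fun q => Finset.Icc (S (σ.symm q) + 1) (T (σ.symm q))
  have hcard : ∀ q, (B q).card = O q := by
    intro q
    simp only [B, Nat.card_Icc, hT, Equiv.apply_symm_apply]
    omega
  have hdisj : ∀ p q, p ≠ q → Disjoint (B p) (B q) := by
    intro p q hpq
    rw [Finset.disjoint_left]
    intro x hp hq
    simp only [B, Finset.mem_Icc] at hp hq
    rcases lt_or_gt_of_ne (σ.symm.injective.ne hpq) with h | h
    · have := hTS _ _ h
      omega
    · have := hTS _ _ h
      omega
  refine ⟨B, hdisj, ?_, hcard, fun q => ⟨_, _, rfl⟩, ?_⟩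
  · -- The intervals lie in `{1, …, U}` and have total size `U`, so they cover it.
    apply Finset.eq_of_subset_of_card_le
    · intro x hx
      obtain ⟨q, -, hxq⟩ := Finset.mem_biUnion.1 hx
      simp only [B, Finset.mem_Icc] at hxq
      have := hTU (σ.symm q)
      exact Finset.mem_Icc.2 ⟨by omega, by omega⟩
    · rw [Finset.card_biUnion fun p _ q _ hpq => hdisj p q hpq]
      simp [hcard, hsum]
  · intro C hd hu hc
    set τ : Equiv.Perm (Fin Q) := Tuple.sort fun q => (C q).sup id with hτ
    have hτmono : Monotone fun k => (C (τ k)).sup id :=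
      Tuple.monotone_sort fun q => (C q).sup id
    rw [← Equiv.sum_comp σ, ← Equiv.sum_comp τ fun q => φ ((C q).sup id)]
    refine Finset.sum_le_sum fun k _ => hφ ?_
    calc (B (σ k)).sup id ≤ T k := Finset.sup_le fun x hx => by
          simp only [B, Finset.mem_Icc, Equiv.symm_apply_apply] at hx
          exact hx.2
      _ ≤ ∑ j ∈ (Finset.Iic k).map (τ.trans σ.symm).toEmbedding, O (σ j) :=
          sum_Iic_le_sum_of_card_eq (O ∘ σ) hmono k _ (Finset.card_map _)
      _ = ∑ j ∈ Finset.Iic k, (C (τ j)).card := by simp [hc]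
      _ ≤ (C (τ k)).sup id := sum_card_le_sup C hd hu τ hτmono k
end

section
/- Let M, N, L, K be positive integers with 1 ≤ K ≤ L < N and K < M. Then lim_{x→∞} h(x; L, K)/x = (M − K) / (N − L + K + 2√(K(N − L))). -/
/-!
For `x > 0`, dividing by `x` turns `h(x; L, K) / x` into a function of `y = x⁻¹` that is continuous
at `y = 0`, so the limit is the value at `y = 0`. With `a = N - L` and `s = √(K a)`, that value is
`(M - K) (a + K - 2 s) / (a - K)²`, and `(a - K)² = (a + K - 2 s) (a + K + 2 s)` since `s² = K a`.
In the degenerate case `a = K` the value is `(M - K) / (4 K)`, which agrees because then `s = K`.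
-/

/-- The asymptotic SINR function `h(x; L, K)` of Lemma 10 (with `A(x) = K N x +
2L(N−L)(1 − √((Kx/(N−L) + 1)(Kx/L + 1)))`), defined piecewise according to whether
non-orthogonal pilots (`K > L`) are used. -/
noncomputable def hSINR (M N L K : ℕ) (x : ℝ) : ℝ :=
  let A : ℝ := (K : ℝ) * N * x +
    2 * L * ((N : ℝ) - L) *
      (1 - Real.sqrt (((K : ℝ) * x / ((N : ℝ) - L) + 1) * ((K : ℝ) * x / L + 1)))
  if L < K then
    ((L : ℝ) * ((M : ℝ) - K) / K) * A /
      (((K : ℝ) - L) * A + (K : ℝ) * ((N : ℝ) - 2 * L) ^ 2)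
  else if N ≠ L + K then
    ((M : ℝ) - K) *
      (((N : ℝ) - L + K) * x +
        2 * ((N : ℝ) - L) *
          (1 - Real.sqrt (((K : ℝ) * x / ((N : ℝ) - L) + 1) * (x + 1)))) /
      ((N : ℝ) - L - K) ^ 2
  else ((M : ℝ) - K) / (4 * K) * (x ^ 2 / (x + 1))

open Filter

/-- Lemma 10, equation (59), case `K ≤ L`: with orthogonal pilots the asymptotic
SINR function grows linearly:
`h(x; L, K)/x → (M − K)/(N − L + K + 2√(K(N − L)))` as `x → ∞`. -/
theorem hSINR_div_linear_tendsto_atTop_of_orthogonal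
    (M N L K : ℕ) (hK : 1 ≤ K) (hKL : K ≤ L) (hLN : L < N) (hKM : K < M) :
    Tendsto (fun x => hSINR M N L K x / x) atTop
      (nhds (((M : ℝ) - K) /
        ((N : ℝ) - L + K + 2 * Real.sqrt ((K : ℝ) * ((N : ℝ) - L))))) := by
  have hk : (0 : ℝ) < K := by exact_mod_cast hK
  have ha : (0 : ℝ) < (N : ℝ) - L := sub_pos.mpr (by exact_mod_cast hLN)
  unfold hSINR
  simp only [not_lt.mpr hKL, if_false]
  by_cases hN : N = L + K
  · have haK : (N : ℝ) - L = K := by rw [hN]; push_cast; ring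
    simp only [hN, ne_eq, not_true_eq_false, if_false]
    rw [← hN, haK, Real.sqrt_mul_self hk.le]
    have hc : ContinuousAt (fun y : ℝ => ((M : ℝ) - K) / (4 * K) * (1 / (1 + y))) 0 := by
      fun_prop (disch := norm_num)
    have ht := hc.tendsto.comp tendsto_inv_atTop_zero
    have hval : ((M : ℝ) - K) / (4 * K) * (1 / (1 + 0)) = ((M : ℝ) - K) / (K + K + 2 * K) := by
      field_simp
      ring
    rw [hval] at ht
    refine ht.congr' ?_
    filter_upwards [eventually_gt_atTop (0 : ℝ)] with x hx
    simp only [Function.comp]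
    have : x + 1 ≠ 0 := by positivity
    field_simp
  · have haK : (N : ℝ) - L - K ≠ 0 := by
      intro h
      apply hN
      have : (N : ℝ) = L + K := by linarith
      exact_mod_cast this
    simp only [ne_eq, hN, not_false_eq_true, if_true]
    generalize (N : ℝ) - L = a at *
    generalize (K : ℝ) = k at *
    have hc : ContinuousAt (fun y : ℝ => ((M : ℝ) - k) *
        ((a + k) + 2 * a * (y - Real.sqrt ((k / a + y) * (1 + y)))) / (a - k) ^ 2) 0 := by
      fun_prop
    have ht := hc.tendsto.comp tendsto_inv_atTop_zero
    have hs : a * Real.sqrt (k / a) = Real.sqrt (k * a) := by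
      rw [← Real.sqrt_sq ha.le, ← Real.sqrt_mul (sq_nonneg a), Real.sqrt_sq ha.le]
      congr 1
      field_simp
    have hs2 : Real.sqrt (k * a) ^ 2 = k * a := Real.sq_sqrt (by positivity)
    have hval : ((M : ℝ) - k) * ((a + k) + 2 * a * (0 - Real.sqrt ((k / a + 0) * (1 + 0)))) /
        (a - k) ^ 2 = ((M : ℝ) - k) / (a + k + 2 * Real.sqrt (k * a)) := by
      have hd : a + k + 2 * Real.sqrt (k * a) ≠ 0 := by positivity
      rw [div_eq_div_iff (pow_ne_zero 2 haK) hd, add_zero, add_zero, mul_one]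
      linear_combination (-2 * (M - k) * (a + k + 2 * Real.sqrt (k * a))) * hs -
        4 * (M - k) * hs2
    rw [hval] at ht
    refine ht.congr' ?_
    filter_upwards [eventually_gt_atTop (0 : ℝ)] with x hx
    simp only [Function.comp]
    have hr : Real.sqrt ((k * x / a + 1) * (x + 1)) =
        x * Real.sqrt ((k / a + x⁻¹) * (1 + x⁻¹)) := by
      rw [show (k * x / a + 1) * (x + 1) = x ^ 2 * ((k / a + x⁻¹) * (1 + x⁻¹)) by field_simp,
        Real.sqrt_mul (sq_nonneg x), Real.sqrt_sq hx.le]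
    rw [hr]
    field_simp
end

section
/- Let M, N, L, K be positive integers with 1 ≤ L < N and 1 ≤ K < M, and assume either K ≤ L, or (K > L and N ≠ 2L). Then lim_{x→0⁺} h(x; L, K)/x² = (M − K) / (4(N − L)). -/
open Filter

/-- The second-order Taylor coefficient at `0` of `√((a x + 1)(b x + 1))`, up to sign.
Nonnegativity of `a` and `b` keeps the radicand nonnegative for every `x > 0`. -/
lemma tendsto_sqrt_remainder (a b : ℝ) (ha : 0 ≤ a) (hb : 0 ≤ b) :
    Tendsto (fun x : ℝ => ((a + b) * x / 2 + (1 - Real.sqrt ((a * x + 1) * (b * x + 1)))) / x ^ 2)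
      (nhdsWithin 0 (Set.Ioi 0)) (nhds ((a - b) ^ 2 / 8)) := by
  have hlim : Tendsto (fun x : ℝ => ((a - b) ^ 2 / 4) /
      ((a + b) * x / 2 + 1 + Real.sqrt ((a * x + 1) * (b * x + 1))))
      (nhdsWithin 0 (Set.Ioi 0)) (nhds ((a - b) ^ 2 / 8)) := by
    have hc : ContinuousAt (fun x : ℝ => ((a - b) ^ 2 / 4) /
        ((a + b) * x / 2 + 1 + Real.sqrt ((a * x + 1) * (b * x + 1)))) 0 := by
      refine ContinuousAt.div (by fun_prop) (by fun_prop) ?_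
      norm_num
    have h := hc.tendsto.mono_left (nhdsWithin_le_nhds (s := Set.Ioi 0))
    convert h using 2
    norm_num
    ring
  refine hlim.congr' ?_
  filter_upwards [self_mem_nhdsWithin] with x hx
  have hx : 0 < x := hx
  have hs := Real.sq_sqrt (show 0 ≤ (a * x + 1) * (b * x + 1) by positivity)
  have hpos : 0 < (a + b) * x / 2 + 1 + Real.sqrt ((a * x + 1) * (b * x + 1)) := by positivity
  rw [div_eq_div_iff hpos.ne' (by positivity)]
  linear_combination hs

/-- Lemma 10, equation (60): for small received energy the asymptotic SINR function
behaves quadratically: `h(x; L, K)/x² → (M − K)/(4(N − L))` as `x → 0⁺`, provided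
either `K ≤ L`, or `K > L` and `N ≠ 2L`. -/
theorem hSINR_div_sq_tendsto_zero_right
    (M N L K : ℕ) (hL : 1 ≤ L) (hLN : L < N) (hK : 1 ≤ K) (hKM : K < M)
    (hcase : K ≤ L ∨ (L < K ∧ N ≠ 2 * L)) :
    Tendsto (fun x => hSINR M N L K x / x ^ 2) (nhdsWithin 0 (Set.Ioi 0))
      (nhds (((M : ℝ) - K) / (4 * ((N : ℝ) - L)))) := by
  have hL0 : (0 : ℝ) < L := by exact_mod_cast hL
  have hK0 : (0 : ℝ) < K := by exact_mod_cast hK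
  have hD : (0 : ℝ) < (N : ℝ) - L := sub_pos.2 (by exact_mod_cast hLN)
  have hid : Tendsto (fun x : ℝ => x) (nhdsWithin 0 (Set.Ioi 0)) (nhds 0) :=
    tendsto_id.mono_left nhdsWithin_le_nhds
  by_cases hLK : L < K
  · have hN2 : (N : ℝ) - 2 * L ≠ 0 := by
      have : N ≠ 2 * L := by
        rcases hcase with h | h
        · omega
        · exact h.2
      exact sub_ne_zero.2 (by exact_mod_cast this)
    set A : ℝ → ℝ := fun x => (K : ℝ) * N * x +
      2 * L * ((N : ℝ) - L) *
        (1 - Real.sqrt (((K : ℝ) * x / ((N : ℝ) - L) + 1) * ((K : ℝ) * x / L + 1))) with hA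
    have hA2 : Tendsto (fun x => A x / x ^ 2) (nhdsWithin 0 (Set.Ioi 0))
        (nhds (2 * L * ((N : ℝ) - L) * (((K : ℝ) / (N - L) - K / L) ^ 2 / 8))) := by
      refine ((tendsto_sqrt_remainder ((K : ℝ) / (N - L)) (K / L)
        (by positivity) (by positivity)).const_mul (2 * L * ((N : ℝ) - L))).congr fun x => ?_
      rw [← mul_div_assoc]
      congr 1
      simp only [hA]
      rw [div_mul_eq_mul_div, div_mul_eq_mul_div, mul_add]
      congr 1
      field_simp
      ring
    have hA0 : Tendsto A (nhdsWithin 0 (Set.Ioi 0)) (nhds 0) := by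
      have h := hA2.mul (hid.pow 2)
      simp only [ne_eq, OfNat.ofNat_ne_zero, not_false_eq_true, zero_pow, mul_zero] at h
      refine h.congr' ?_
      filter_upwards [self_mem_nhdsWithin] with x hx
      exact div_mul_cancel₀ _ (pow_ne_zero 2 (ne_of_gt hx))
    have hden := (hA0.const_mul ((K : ℝ) - L)).add_const ((K : ℝ) * ((N : ℝ) - 2 * L) ^ 2)
    have h := (hA2.const_mul ((L : ℝ) * ((M : ℝ) - K) / K)).div hden
      (by rw [mul_zero, zero_add]; positivity)
    convert h using 2
    · simp only [hSINR, if_pos hLK, hA, Pi.div_apply]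
      ring
    · have hD' := hD.ne'
      have hab : (K : ℝ) / (N - L) - K / L = -(K * ((N : ℝ) - 2 * L)) / ((N - L) * L) := by
        field_simp
        ring
      rw [mul_zero, zero_add, hab]
      -- As an atom `c`, the nonvanishing factor is cancelled by `field_simp`.
      generalize (N : ℝ) - 2 * L = c at hN2
      field_simp
      ring
  · by_cases hN : N = L + K
    · have hNK : (N : ℝ) - L = K := by rw [hN]; push_cast; ring
      have h : Tendsto (fun x : ℝ => ((M : ℝ) - K) / (4 * K) / (x + 1))
          (nhdsWithin 0 (Set.Ioi 0)) (nhds (((M : ℝ) - K) / (4 * K) / (0 + 1))) :=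
        tendsto_const_nhds.div (hid.add_const 1) (by norm_num)
      rw [hNK]
      rw [zero_add, div_one] at h
      refine h.congr' ?_
      filter_upwards [self_mem_nhdsWithin] with x hx
      have hx : 0 < x := hx
      simp only [hSINR, if_neg hLK, if_neg (not_not.2 hN)]
      field_simp
    · have hN2 : (N : ℝ) - L - K ≠ 0 := by
        rw [sub_sub]
        exact sub_ne_zero.2 (by exact_mod_cast hN)
      have h := (tendsto_sqrt_remainder ((K : ℝ) / (N - L)) 1
        (by positivity) (by positivity)).const_mul
          (((M : ℝ) - K) * (2 * ((N : ℝ) - L)) / ((N : ℝ) - L - K) ^ 2)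
      convert h using 2
      · rename_i x
        simp only [hSINR, if_neg hLK, if_pos hN]
        rw [div_mul_eq_mul_div (K : ℝ) ((N : ℝ) - L) x, one_mul]
        generalize Real.sqrt _ = s
        -- At `x = 0` both sides are a division by zero, hence `0`.
        rcases eq_or_ne x 0 with rfl | hx
        · simp
        have hD' := hD.ne'
        field_simp
        ring
      · have hD' := hD.ne'
        field_simp
        ring
end

section
/- Fix a real number N > 0 and define f(λ, χ) = χ·(1 − λ/N)·log(1 + λ/χ²) for λ ∈ (0, N) and χ > 0. Then (λ₀, χ₀) with λ₀ ∈ (0, N) and χ₀ > 0 satisfies ∂f/∂λ(λ₀, χ₀) = 0 and ∂f/∂χ(λ₀, χ₀) = 0 if and only if λ₀ = N/3 and v := 3χ₀²/N satisfies log(1 + 1/v) = 2/(v + 1). -/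
/-!
Write `L = log (1 + l / x²)`. On `0 < l < N`, `0 < x`, the factors `x` and `1 - l / N` do not vanish,
so the two partial derivatives vanish exactly when `L (x² + l) = N - l` and `L (x² + l) = 2 l`
respectively. Together these say `N - l = 2 l`, i.e. `l = N / 3`, and `L = 2 l / (x² + l)`; at
`l = N / 3` the latter is the equation `log (1 + 1 / v) = 2 / (v + 1)` for `v = 3 x² / N`.
-/

lemma deriv_fst_eq_zero_iff {N l x : ℝ} (hN : 0 < N) (hl : 0 < l) (hx : 0 < x) :
    deriv (fun l => x * (1 - l / N) * Real.log (1 + l / x ^ 2)) l = 0 ↔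
      Real.log (1 + l / x ^ 2) * (x ^ 2 + l) = N - l := by
  have hpos : 0 < 1 + l / x ^ 2 := by positivity
  have hsum : 0 < x ^ 2 + l := by positivity
  have hlog : HasDerivAt (fun l : ℝ => Real.log (1 + l / x ^ 2))
      (1 / x ^ 2 / (1 + l / x ^ 2)) l :=
    (((hasDerivAt_id l).div_const (x ^ 2)).const_add 1).log hpos.ne'
  have hfac : HasDerivAt (fun l : ℝ => x * (1 - l / N)) (x * -(1 / N)) l :=
    (((hasDerivAt_id l).div_const N).const_sub 1).const_mul x
  rw [(hfac.fun_mul hlog).deriv]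
  generalize Real.log (1 + l / x ^ 2) = L
  have key : x * -(1 / N) * L + x * (1 - l / N) * (1 / x ^ 2 / (1 + l / x ^ 2)) =
      x / (N * (x ^ 2 + l)) * (N - l - L * (x ^ 2 + l)) := by
    field_simp
    ring
  have hc : x / (N * (x ^ 2 + l)) ≠ 0 := by positivity
  rw [key, mul_eq_zero, or_iff_right hc, sub_eq_zero, eq_comm]

lemma deriv_snd_eq_zero_iff {N l x : ℝ} (hl : 0 < l) (hlN : l < N) (hx : 0 < x) :
    deriv (fun x => x * (1 - l / N) * Real.log (1 + l / x ^ 2)) x = 0 ↔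
      Real.log (1 + l / x ^ 2) * (x ^ 2 + l) = 2 * l := by
  have hN : 0 < N := hl.trans hlN
  have hpos : 0 < 1 + l / x ^ 2 := by positivity
  have hsum : 0 < x ^ 2 + l := by positivity
  have hlog : HasDerivAt (fun x : ℝ => Real.log (1 + l / x ^ 2))
      (-(2 * l / x ^ 3) / (1 + l / x ^ 2)) x := by
    have h := (((hasDerivAt_const x l).fun_div (hasDerivAt_pow 2 x)
      (by positivity)).const_add 1).log hpos.ne'
    convert h using 2
    push_cast
    field_simp
    ring
  have hfac : HasDerivAt (fun x : ℝ => x * (1 - l / N)) (1 * (1 - l / N)) x :=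
    (hasDerivAt_id x).mul_const _
  rw [(hfac.fun_mul hlog).deriv]
  generalize Real.log (1 + l / x ^ 2) = L
  have key : 1 * (1 - l / N) * L + x * (1 - l / N) * (-(2 * l / x ^ 3) / (1 + l / x ^ 2)) =
      (N - l) / (N * (x ^ 2 + l)) * (L * (x ^ 2 + l) - 2 * l) := by
    field_simp
    ring
  have hc : (N - l) / (N * (x ^ 2 + l)) ≠ 0 :=
    (div_pos (sub_pos.2 hlN) (by positivity)).ne'
  rw [key, mul_eq_zero, or_iff_right hc, sub_eq_zero]

/-- Theorem 5 (Regime ii) inner optimization: the function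
`f(λ, χ) = χ(1 − λ/N)·log(1 + λ/χ²)` on `(0, N) × (0, ∞)` has a critical point at
`(λ₀, χ₀)` if and only if `λ₀ = N/3` and `v = 3χ₀²/N` solves
`log(1 + 1/v) = 2/(v + 1)`. -/
theorem critical_point_iff
    (N : ℝ) (hN : 0 < N) (l₀ x₀ : ℝ) (hl : l₀ ∈ Set.Ioo (0 : ℝ) N) (hx : 0 < x₀) :
    (deriv (fun l => x₀ * (1 - l / N) * Real.log (1 + l / x₀ ^ 2)) l₀ = 0 ∧
     deriv (fun x => x * (1 - l₀ / N) * Real.log (1 + l₀ / x ^ 2)) x₀ = 0) ↔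
    (l₀ = N / 3 ∧
     Real.log (1 + 1 / (3 * x₀ ^ 2 / N)) = 2 / (3 * x₀ ^ 2 / N + 1)) := by
  rw [deriv_fst_eq_zero_iff hN hl.1 hx, deriv_snd_eq_zero_iff hl.1 hl.2 hx]
  have harg : 1 + 1 / (3 * x₀ ^ 2 / N) = 1 + N / 3 / x₀ ^ 2 := by field_simp
  have hrhs : 2 / (3 * x₀ ^ 2 / N + 1) = 2 * (N / 3) / (x₀ ^ 2 + N / 3) := by field_simp
  have hsum : x₀ ^ 2 + N / 3 ≠ 0 := by positivity
  rw [harg, hrhs, eq_div_iff hsum]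
  constructor
  · rintro ⟨h1, h2⟩
    have h : l₀ = N / 3 := by linarith
    subst h
    exact ⟨rfl, h2⟩
  · rintro ⟨rfl, h2⟩
    exact ⟨by linarith, h2⟩
end
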